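/- Suppose p = b+2 and 2 ≤ ℓ ≤ b+1. Then the trace of the linear endomorphism f ↦ ρ(g·f) of W equals (1/π_ℓ)·{ (b+1)·e_ℓ(n_1−1,…,n_ℓ−1) + e_{ℓ−1}(n_1−1,…,n_ℓ−1) + (−1)^{ℓ−1}·(b−ℓ+1) }. -/

import Mathlib

open Finset MvPolynomial

noncomputable section

/-- Value of the elementary symmetric polynomial `e_k` at the family `v` restricted to `A`. -/
def esymVal {α F : Type*} [DecidableEq α] [CommRing F] (A : Finset α) (k : ℕ) (v : α → F) : F :=
  ∑ B ∈ A.powersetCard k, ∏ i ∈ B, v i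

/-- Pochhammer symbol `(a)_k = a (a+1) ⋯ (a+k-1)`. -/
def poch (a : ℚ) (k : ℕ) : ℚ := ∏ i ∈ Finset.range k, (a + (i : ℚ))

variable {p : ℕ}

/-- The index in `Fin (∑ t, n t)` of the `i`-th element of the `j`-th consecutive block. -/
def emb (n : Fin p → ℕ) (j : Fin p) (i : Fin (n j)) : Fin (∑ t, n t) :=
  ⟨(∑ t ∈ Finset.univ.filter (fun t => t < j), n t) + i, by
    have hj : j ∉ Finset.univ.filter (fun t => t < j) := by simp
    have h2 : ∑ t ∈ insert j (Finset.univ.filter (fun t => t < j)), n t ≤ ∑ t, n t :=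
      Finset.sum_le_sum_of_subset (Finset.subset_univ _)
    rw [Finset.sum_insert hj] at h2
    have := i.isLt
    omega⟩

/-- The Young subgroup: permutations mapping each block onto itself. -/
def youngGroup (n : Fin p → ℕ) : Finset (Equiv.Perm (Fin (∑ t, n t))) :=
  Finset.univ.filter fun w => ∀ (j : Fin p) (i : Fin (n j)), ∃ i' : Fin (n j),
    w (emb n j i) = emb n j i'

/-- The action of a permutation of the variables on polynomials, as a linear map. -/
def permAct {σ : Type*} (w : Equiv.Perm σ) :
    MvPolynomial σ ℚ →ₗ[ℚ] MvPolynomial σ ℚ :=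
  (MvPolynomial.rename ⇑w).toLinearMap

/-- Averaging operator over the Young subgroup. -/
def rho (n : Fin p → ℕ) :
    MvPolynomial (Fin (∑ t, n t)) ℚ →ₗ[ℚ] MvPolynomial (Fin (∑ t, n t)) ℚ :=
  ((youngGroup n).card : ℚ)⁻¹ • ∑ h ∈ youngGroup n, permAct h

/-- The alternating (Vandermonde) polynomial in the variables `x_{t 0}, …, x_{t b}`. -/
def Delta {N b : ℕ} (t : Fin (b + 1) → Fin N) : MvPolynomial (Fin N) ℚ :=
  ∏ q ∈ Finset.univ.filter (fun q : Fin (b + 1) × Fin (b + 1) => q.1 < q.2),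
    (X (t q.1) - X (t q.2))

/-- The span of all `Δ(x_{i₁},…,x_{i_{b+1}})` with `i₁ < ⋯ < i_{b+1}`. -/
def hookSpan (N b : ℕ) : Submodule ℚ (MvPolynomial (Fin N) ℚ) :=
  Submodule.span ℚ {f | ∃ t : Fin (b + 1) → Fin N, StrictMono t ∧ f = Delta t}

/-- The first `ℓ` block labels. -/
def firstL (p ℓ : ℕ) : Finset (Fin p) := Finset.univ.filter fun i => (i : ℕ) < ℓ


/-- Vandermonde product with the sign convention of `Delta`. -/
def VM {R : Type*} [CommRing R] {m : ℕ} (v : Fin m → R) : R :=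
  (Matrix.vandermonde (fun i => - v i)).det

lemma Delta_eq_VM {N b : ℕ} (t : Fin (b + 1) → Fin N) :
    Delta t = VM (fun i => (X (t i) : MvPolynomial (Fin N) ℚ)) := by
  unfold Delta VM
  rw [Matrix.det_vandermonde, Finset.prod_sigma']
  refine Finset.prod_bij' (fun q _ => ⟨q.1, q.2⟩) (fun q _ => (q.1, q.2)) ?_ ?_ ?_ ?_ ?_
  · intro a ha; simpa using ha
  · intro a ha; simpa using ha
  · intro a _; rfl
  · intro a _; rfl
  · intro a _; simp only; ring

lemma VM_perm {R : Type*} [CommRing R] {m : ℕ} (v : Fin m → R) (e : Equiv.Perm (Fin m)) :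
    VM (fun i => v (e i)) = ((Equiv.Perm.sign e : ℤ) : R) * VM v := by
  unfold VM
  rw [← Matrix.det_permute]
  rfl

lemma VM_eq_zero {R : Type*} [CommRing R] {m : ℕ} (v : Fin m → R) {i j : Fin m} (h : v i = v j)
    (hij : i ≠ j) : VM v = 0 := by
  unfold VM
  refine Matrix.det_zero_of_row_eq hij ?_
  ext k
  simp [Matrix.vandermonde, h]

lemma VM_ne_zero {m : ℕ} (v : Fin m → ℚ) (h : Function.Injective v) : VM v ≠ 0 := by
  unfold VM
  rw [Matrix.det_vandermonde_ne_zero_iff]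
  intro i j hij
  exact h (neg_injective hij)

lemma VM_map {R S : Type*} [CommRing R] [CommRing S] {m : ℕ} (f : R →+* S) (v : Fin m → R) :
    f (VM v) = VM (fun i => f (v i)) := by
  unfold VM
  rw [RingHom.map_det]
  congr 1
  ext i j
  simp [Matrix.vandermonde]

lemma VM_rel {R : Type*} [CommRing R] {m : ℕ} (v : Fin (m + 2) → R) :
    ∑ k : Fin (m + 2), (-1 : R) ^ (k : ℕ) * VM (fun i => v (k.succAbove i)) = 0 := by
  let A : Matrix (Fin (m + 2)) (Fin (m + 2)) R :=
    Matrix.of fun i j => Fin.cases 1 (fun j' => (- v i) ^ (j' : ℕ)) j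
  have h0 : A.det = 0 := by
    refine Matrix.det_zero_of_column_eq (i := 0) (j := 1) (by simp) ?_
    intro k
    have : (1 : Fin (m + 2)) = Fin.succ 0 := rfl
    simp only [A, Matrix.of_apply, this, Fin.cases_succ, Fin.cases_zero]
    simp
  rw [Matrix.det_succ_column_zero] at h0
  rw [← h0]
  refine Finset.sum_congr rfl fun k _ => ?_
  have : A k 0 = 1 := rfl
  rw [this, mul_one]
  rfl

lemma trace_lemma {V ι : Type*} [AddCommGroup V] [Module ℚ V] [Fintype ι] [DecidableEq ι]
    (W : Submodule ℚ V) [FiniteDimensional ℚ W] (T : V →ₗ[ℚ] V) (hW : ∀ f ∈ W, T f ∈ W)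
    (D : ι → V) (φ : ι → V →ₗ[ℚ] ℚ) (hD : ∀ i, D i ∈ W)
    (hspan : ∀ f ∈ W, T f ∈ Submodule.span ℚ (Set.range D))
    (hort : ∀ i j, i ≠ j → φ i (D j) = 0) (hne : ∀ i, φ i (D i) ≠ 0) :
    LinearMap.trace ℚ W (T.restrict hW) = ∑ i, φ i (T (D i)) / φ i (D i) := by
  have key : T.restrict hW = ∑ i, LinearMap.smulRight
      ((φ i (D i))⁻¹ • ((φ i).comp (T.comp W.subtype))) (⟨D i, hD i⟩ : W) := by
    ext w
    obtain ⟨c, hc⟩ := (Submodule.mem_span_range_iff_exists_fun ℚ).1 (hspan w w.2)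
    have hφ : ∀ i, φ i (T w) = c i * φ i (D i) := by
      intro i
      rw [← hc, map_sum, Finset.sum_eq_single i]
      · simp
      · intro j _ hj
        simp [hort i j hj.symm]
      · simp
    simp only [LinearMap.coe_restrict_apply, LinearMap.sum_apply, Submodule.coe_sum]
    rw [← hc]
    refine Finset.sum_congr rfl fun i _ => ?_
    simp only [LinearMap.smulRight_apply, LinearMap.smul_apply, LinearMap.comp_apply,
      Submodule.subtype_apply, hφ, smul_eq_mul, Submodule.coe_smul]
    congr 1
    field_simp [hne i]
  rw [key, map_sum]
  refine Finset.sum_congr rfl fun i _ => ?_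
  rw [LinearMap.trace_smulRight]
  simp [div_eq_inv_mul]

lemma Delta_mem {N b : ℕ} (t : Fin (b + 1) → Fin N) : Delta t ∈ hookSpan N b := by
  by_cases h : Function.Injective t
  · have hm : StrictMono (t ∘ Tuple.sort t) :=
      (Tuple.monotone_sort t).strictMono_of_injective (h.comp (Tuple.sort t).injective)
    have h1 : Delta (t ∘ Tuple.sort t) ∈ hookSpan N b := Submodule.subset_span ⟨_, hm, rfl⟩
    have h2 : Delta t = ((Equiv.Perm.sign (Tuple.sort t) : ℤ) : ℚ) • Delta (t ∘ Tuple.sort t) := by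
      rw [Delta_eq_VM, Delta_eq_VM]
      have := VM_perm (fun i => (X (t i) : MvPolynomial (Fin N) ℚ)) (Tuple.sort t)
      simp only [Function.comp]
      rw [this]
      rcases Int.units_eq_one_or (Equiv.Perm.sign (Tuple.sort t)) with h | h <;> simp [h]
    rw [h2]
    exact Submodule.smul_mem _ _ h1
  · simp only [Function.Injective, not_forall] at h
    obtain ⟨i, j, hij, hne⟩ := h
    rw [Delta_eq_VM, VM_eq_zero _ (i := i) (j := j) (by rw [hij]) hne]
    exact zero_mem _

lemma hookSpan_finite (N b : ℕ) : FiniteDimensional ℚ (hookSpan N b) := by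
  unfold hookSpan
  apply FiniteDimensional.span_of_finite
  refine (Set.finite_range (fun t : Fin (b + 1) → Fin N => Delta t)).subset ?_
  rintro f ⟨t, _, rfl⟩
  exact ⟨t, rfl⟩

lemma permAct_Delta {N b : ℕ} (w : Equiv.Perm (Fin N)) (t : Fin (b + 1) → Fin N) :
    permAct w (Delta t) = Delta (fun i => w (t i)) := by
  rw [Delta_eq_VM, Delta_eq_VM]
  have := VM_map (MvPolynomial.rename (R := ℚ) ⇑w).toRingHom
    (fun i => (X (t i) : MvPolynomial (Fin N) ℚ))
  simpa [permAct] using this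

/-- block structure -/
lemma exists_blk (n : Fin p → ℕ) : ∃ blk : Fin (∑ t, n t) → Fin p,
    (∀ j i, blk (emb n j i) = j) ∧ (∀ a, ∃ i, a = emb n (blk a) i) ∧
    (∀ j, (Finset.univ.filter fun a => blk a = j).card = n j) := by
  have hlt : ∀ (j k : Fin p) (i : Fin (n j)) (i' : Fin (n k)), j < k →
      (emb n j i : ℕ) < emb n k i' := by
    intro j k i i' hjk
    have hj : j ∉ Finset.univ.filter (fun t => t < j) := by simp
    have h2 : ∑ t ∈ insert j (Finset.univ.filter (fun t => t < j)), n t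
        ≤ ∑ t ∈ Finset.univ.filter (fun t => t < k), n t := by
      refine Finset.sum_le_sum_of_subset ?_
      intro x hx
      simp only [Finset.mem_insert, Finset.mem_filter, Finset.mem_univ, true_and] at hx ⊢
      rcases hx with rfl | hx
      · exact hjk
      · exact hx.trans hjk
    rw [Finset.sum_insert hj] at h2
    have := i.isLt
    simp only [emb]
    omega
  let e : (Σ j : Fin p, Fin (n j)) → Fin (∑ t, n t) := fun x => emb n x.1 x.2
  have hinj : Function.Injective e := by
    rintro ⟨j, i⟩ ⟨k, i'⟩ h
    simp only [e] at h
    rcases lt_trichotomy j k with hjk | rfl | hjk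
    · have := hlt j k i i' hjk
      rw [h] at this; omega
    · have h' := congrArg Fin.val h
      simp only [emb] at h'
      have : i = i' := Fin.ext (by omega)
      rw [this]
    · have := hlt k j i' i hjk
      rw [h] at this; omega
  have hbij : Function.Bijective e := by
    rw [Fintype.bijective_iff_injective_and_card]
    exact ⟨hinj, by simp⟩
  let E := Equiv.ofBijective e hbij
  have hE : ∀ j i, E ⟨j, i⟩ = emb n j i := fun j i => rfl
  have hb : ∀ j i, (E.symm (emb n j i)).1 = j := by
    intro j i
    rw [← hE, Equiv.symm_apply_apply]
  refine ⟨fun a => (E.symm a).1, hb, ?_, ?_⟩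
  · intro a
    refine ⟨(E.symm a).2, ?_⟩
    rw [← hE]
    simp
  · intro j
    rw [← Fintype.card_fin (n j), ← Finset.card_univ]
    symm
    refine Finset.card_bij (fun i _ => emb n j i) ?_ ?_ ?_
    · intro i _
      simp [hb]
    · intro i _ i' _ h
      have := hinj (a₁ := ⟨j, i⟩) (a₂ := ⟨j, i'⟩) h
      simpa using this
    · intro a ha
      simp only [Finset.mem_filter, Finset.mem_univ, true_and] at ha
      subst ha
      refine ⟨(E.symm a).2, Finset.mem_univ _, ?_⟩
      rw [← hE]
      simp

lemma perm_apply_inv {α : Type*} (w : Equiv.Perm α) (a : α) : w (w⁻¹ a) = a :=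
  Equiv.apply_symm_apply w a

lemma perm_inv_apply {α : Type*} (w : Equiv.Perm α) (a : α) : w⁻¹ (w a) = a :=
  Equiv.symm_apply_apply w a

/-- evaluation points -/
def yv (b : ℕ) (k : Fin (b + 1)) (j : Fin (b + 2)) : ℚ :=
  if j = Fin.last (b + 1) then (k : ℕ) else (j : ℕ)

lemma yv_inj (b : ℕ) (k : Fin (b + 1)) :
    Function.Injective (fun i => yv b k (k.castSucc.succAbove i)) := by
  intro i j h
  have hi : k.castSucc.succAbove i ≠ k.castSucc := Fin.succAbove_ne _ _
  have hj : k.castSucc.succAbove j ≠ k.castSucc := Fin.succAbove_ne _ _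
  apply Fin.succAbove_right_injective (p := k.castSucc)
  simp only [yv] at h
  revert h hi hj
  generalize k.castSucc.succAbove i = x
  generalize k.castSucc.succAbove j = y
  intro h hi hj
  rw [Ne, Fin.ext_iff] at hi hj
  simp only [Fin.val_castSucc] at hi hj
  split_ifs at h with h1 h2 h2
  · rw [h1, h2]
  · exact absurd (by exact_mod_cast h.symm) hj
  · exact absurd (by exact_mod_cast h) hi
  · exact Fin.ext (by exact_mod_cast h)

lemma VM_yv_zero (b : ℕ) (k : Fin (b + 1)) (q : Fin (b + 2)) (u : Fin (b + 2) → Fin (b + 2))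
    {x y : Fin (b + 2)} (hx : x ≠ q) (hy : y ≠ q) (hxy : x ≠ y)
    (h : yv b k (u x) = yv b k (u y)) :
    VM (fun i => yv b k (u (q.succAbove i))) = 0 := by
  obtain ⟨i, rfl⟩ := Fin.exists_succAbove_eq hx
  obtain ⟨j, rfl⟩ := Fin.exists_succAbove_eq hy
  refine VM_eq_zero _ (i := i) (j := j) h ?_
  rintro rfl
  exact hxy rfl

lemma R1 (b ℓ : ℕ) (k : Fin (b + 1)) (P : Fin (b + 2) → Prop) (u : Fin (b + 2) → Fin (b + 2))
    (hu : ∀ j : Fin (b + 2), ¬ ((j : ℕ) < ℓ ∧ P j) → u j = j)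
    (h : ∀ j : Fin (b + 2), (j : ℕ) < ℓ → j ≠ k.castSucc → ¬ P j) :
    VM (fun i => yv b k (u (k.castSucc.succAbove i)))
      = VM (fun i => yv b k (k.castSucc.succAbove i)) := by
  congr 1
  funext i
  rw [hu]
  rintro ⟨h1, h2⟩
  exact h _ h1 (Fin.succAbove_ne _ _) h2

lemma R2 (b ℓ : ℕ) (hℓ : 2 ≤ ℓ) (k : Fin (b + 1)) (hk : ℓ ≤ (k : ℕ)) (P : Fin (b + 2) → Prop)
    (u : Fin (b + 2) → Fin (b + 2))
    (hu : ∀ j : Fin (b + 2), ¬ ((j : ℕ) < ℓ ∧ P j) → u j = j)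
    (hu1 : ∀ j : Fin (b + 2), (j : ℕ) + 1 < ℓ → P j → (u j : ℕ) = j + 1)
    (hu2 : ∀ j : Fin (b + 2), (j : ℕ) + 1 = ℓ → P j → (u j : ℕ) = 0)
    (h : ∀ j : Fin (b + 2), (j : ℕ) < ℓ → P j) :
    VM (fun i => yv b k (u (k.castSucc.succAbove i)))
      = (-1) ^ (ℓ - 1) * VM (fun i => yv b k (k.castSucc.succAbove i)) := by
  have hkb := k.isLt
  let m : Fin (b + 1) := ⟨ℓ - 1, by omega⟩
  have h1 := VM_perm (fun i => yv b k (k.castSucc.succAbove i)) m.cycleRange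
  rw [Fin.sign_cycleRange] at h1
  have h2 : (((((-1 : ℤˣ) ^ (m : ℕ) : ℤˣ) : ℤ)) : ℚ) = (-1) ^ (ℓ - 1) := by
    simp [m]
  rw [h2] at h1
  rw [← h1]
  congr 1
  funext i
  congr 1
  apply Fin.ext
  have hsv : ∀ z : Fin (b + 1), ((k.castSucc.succAbove z : Fin (b + 2)) : ℕ)
      = if (z : ℕ) < k then (z : ℕ) else z + 1 := by
    intro z
    simp only [Fin.succAbove, Fin.lt_def, Fin.val_castSucc]
    split_ifs <;> simp
  have hi := hsv i
  rw [hsv]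
  rcases lt_trichotomy i m with him | him | him
  · rw [Fin.coe_cycleRange_of_lt him]
    have him' : (i : ℕ) < ℓ - 1 := him
    rw [if_pos (by omega)] at hi
    rw [if_pos (by omega), hu1 _ (by omega) (h _ (by omega)), hi]
  · have him' : (i : ℕ) = ℓ - 1 := congrArg Fin.val him
    rw [Fin.coe_cycleRange_of_le him.le, if_pos him, if_pos (by omega)]
    rw [if_pos (by omega)] at hi
    rw [hu2 _ (by omega) (h _ (by omega))]
  · rw [Fin.cycleRange_of_gt him, ← hsv, hu]
    rintro ⟨h3, -⟩
    have him' : ℓ - 1 < (i : ℕ) := him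
    rw [hi] at h3
    split_ifs at h3 <;> omega

lemma R3 (b ℓ : ℕ) (hℓ : 2 ≤ ℓ) (hℓb : ℓ ≤ b + 1) (k : Fin (b + 1)) (P : Fin (b + 2) → Prop)
    (u : Fin (b + 2) → Fin (b + 2))
    (hu : ∀ j : Fin (b + 2), ¬ ((j : ℕ) < ℓ ∧ P j) → u j = j)
    (hu1 : ∀ j : Fin (b + 2), (j : ℕ) + 1 < ℓ → P j → (u j : ℕ) = j + 1)
    (hu2 : ∀ j : Fin (b + 2), (j : ℕ) + 1 = ℓ → P j → (u j : ℕ) = 0)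
    (j0 j1 : Fin (b + 2)) (hj0 : (j0 : ℕ) < ℓ) (hj0k : j0 ≠ k.castSucc) (hP0 : P j0)
    (hj1 : (j1 : ℕ) < ℓ) (hP1 : j1 = k.castSucc ∨ ¬ P j1) :
    VM (fun i => yv b k (u (k.castSucc.succAbove i))) = 0 := by
  by_contra hne
  have step : ∀ j j' : Fin (b + 2), (j : ℕ) < ℓ → j ≠ k.castSucc → P j → u j = j' →
      (j' : ℕ) < ℓ → j ≠ j' → j' ≠ k.castSucc ∧ P j' := by
    intro j j' hj hjk hP huj hj' hjj
    by_contra hcon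
    apply hne
    by_cases hk : j' = k.castSucc
    · refine VM_yv_zero b k _ u hjk (y := Fin.last (b + 1)) ?_ ?_ ?_
      · exact (Fin.castSucc_lt_last k).ne'
      · intro h; rw [h, Fin.val_last] at hj; omega
      · rw [hu (Fin.last (b + 1)) (by rw [Fin.val_last]; omega), huj, hk]
        simp [yv, (Fin.castSucc_lt_last k).ne]
    · have hP' : ¬ P j' := fun h => hcon ⟨hk, h⟩
      refine VM_yv_zero b k _ u hjk hk hjj ?_
      rw [hu j' (fun h => hP' h.2), huj]
  have up : ∀ d : ℕ, ∀ j j' : Fin (b + 2), j ≠ k.castSucc → P j → (j' : ℕ) = j + d →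
      (j' : ℕ) < ℓ → j' ≠ k.castSucc ∧ P j' := by
    intro d
    induction d with
    | zero =>
      intro j j' h1 h2 h3 _
      have : j' = j := Fin.ext (by omega)
      rw [this]; exact ⟨h1, h2⟩
    | succ d ih =>
      intro j j' h1 h2 h3 h4
      obtain ⟨h5, h6⟩ := ih j ⟨j + d, by omega⟩ h1 h2 rfl (by simp only; omega)
      refine step _ j' (by simp only; omega) h5 h6 (Fin.ext ?_) h4 ?_
      · rw [hu1 _ (by simp only; omega) h6]; simp only; omega
      · intro h; have := congrArg Fin.val h; simp only at this; omega
  obtain ⟨h1, h2⟩ := up (ℓ - 1 - j0) j0 ⟨ℓ - 1, by omega⟩ hj0k hP0 (by simp only; omega)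
    (by simp only; omega)
  obtain ⟨h3, h4⟩ := step _ ⟨0, by omega⟩ (by simp only; omega) h1 h2
    (Fin.ext (by rw [hu2 _ (by simp only; omega) h2])) (by simp only; omega)
    (by intro h; have := congrArg Fin.val h; simp only at this; omega)
  obtain ⟨h5, h6⟩ := up j1 ⟨0, by omega⟩ j1 h3 h4 (by simp) hj1
  rcases hP1 with h | h
  · exact h5 h
  · exact h h6

lemma exists_mover {N q : ℕ} (blk : Fin N → Fin q) (s c : Fin q → Fin N)
    (hs : ∀ j, blk (s j) = j) (hc : ∀ j, blk (c j) = j) :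
    ∃ w : Equiv.Perm (Fin N), (∀ a, blk (w a) = blk a) ∧ ∀ j, w (s j) = c j := by
  let f : Fin N → Fin N := fun a => Equiv.swap (s (blk a)) (c (blk a)) a
  have hf : ∀ a, blk (f a) = blk a := by
    intro a
    simp only [f, Equiv.swap_apply_def]
    split_ifs
    · rw [hc]
    · rw [hs]
    · rfl
  have hinv : Function.Involutive f := by
    intro a
    have : f (f a) = Equiv.swap (s (blk (f a))) (c (blk (f a))) (f a) := rfl
    rw [this, hf]
    simp [f]
  refine ⟨hinv.toPerm f, hf, ?_⟩
  intro j
  simp [f, hs]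

lemma mem_young (n : Fin p → ℕ) (blk : Fin (∑ t, n t) → Fin p)
    (h1 : ∀ j i, blk (emb n j i) = j) (h2 : ∀ a, ∃ i, a = emb n (blk a) i)
    (w : Equiv.Perm (Fin (∑ t, n t))) : w ∈ youngGroup n ↔ ∀ a, blk (w a) = blk a := by
  simp only [youngGroup, Finset.mem_filter, Finset.mem_univ, true_and]
  constructor
  · intro h a
    obtain ⟨i, hi⟩ := h2 a
    obtain ⟨i', hi'⟩ := h (blk a) i
    rw [← hi] at hi'
    rw [hi', h1]
  · intro h j i
    obtain ⟨i', hi'⟩ := h2 (w (emb n j i))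
    have h3 := h (emb n j i)
    rw [h1] at h3
    generalize blk (w (emb n j i)) = j' at i' hi' h3
    subst h3
    exact ⟨i', hi'⟩

lemma young_avg {N q : ℕ} (G : Finset (Equiv.Perm (Fin N))) (blk : Fin N → Fin q)
    (hG : ∀ w, w ∈ G ↔ ∀ a, blk (w a) = blk a) (s : Fin q → Fin N) (hs : ∀ j, blk (s j) = j)
    (F : (Fin q → Fin N) → ℚ) :
    (G.card : ℚ)⁻¹ * ∑ h ∈ G, F (fun j => h (s j))
      = (∏ j, ((Finset.univ.filter fun a => blk a = j).card : ℚ))⁻¹ *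
        ∑ c ∈ Fintype.piFinset (fun j => Finset.univ.filter fun a => blk a = j), F c := by
  set B := Fintype.piFinset (fun j : Fin q => Finset.univ.filter fun a => blk a = j) with hB
  have hmem : ∀ c, c ∈ B ↔ ∀ j, blk (c j) = j := by
    intro c; simp [hB]
  let K := (G.filter fun h => (fun j => h (s j)) = s).card
  have hK : ∀ c ∈ B, (G.filter fun h => (fun j => h (s j)) = c).card = K := by
    intro c hc
    obtain ⟨w, hw1, hw2⟩ := exists_mover blk s c hs ((hmem c).1 hc)
    symm
    refine Finset.card_bij (fun h _ => w * h) ?_ ?_ ?_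
    · intro h hh
      simp only [Finset.mem_filter, hG] at hh ⊢
      refine ⟨fun a => by rw [Equiv.Perm.mul_apply, hw1, hh.1], ?_⟩
      funext j
      rw [Equiv.Perm.mul_apply, congrFun hh.2 j, hw2]
    · intro h _ h' _ e
      exact mul_left_cancel e
    · intro h hh
      simp only [Finset.mem_filter, hG] at hh
      refine ⟨w⁻¹ * h, ?_, by simp⟩
      simp only [Finset.mem_filter, hG]
      refine ⟨fun a => ?_, ?_⟩
      · rw [← hw1, Equiv.Perm.mul_apply, perm_apply_inv, hh.1]
      · funext j
        rw [Equiv.Perm.mul_apply, congrFun hh.2 j, ← hw2, perm_inv_apply]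
  have hmaps : ∀ h ∈ G, (fun j => h (s j)) ∈ B := by
    intro h hh
    rw [hmem]
    intro j
    rw [(hG h).1 hh, hs]
  have hsum : ∀ F : (Fin q → Fin N) → ℚ, ∑ h ∈ G, F (fun j => h (s j)) = K * ∑ c ∈ B, F c := by
    intro F
    rw [← Finset.sum_fiberwise_of_maps_to hmaps, Finset.mul_sum]
    refine Finset.sum_congr rfl fun c hc => ?_
    rw [← hK c hc, ← nsmul_eq_mul, ← Finset.sum_const]
    refine Finset.sum_congr rfl fun h hh => ?_
    rw [(Finset.mem_filter.1 hh).2]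
  have hcard : (G.card : ℚ) = K * B.card := by
    have := hsum (fun _ => 1)
    simpa using this
  have hBc : (B.card : ℚ) = ∏ j, ((Finset.univ.filter fun a => blk a = j).card : ℚ) := by
    rw [hB, Fintype.card_piFinset]; push_cast; rfl
  have hKpos : (K : ℚ) ≠ 0 := by
    have : (1 : Equiv.Perm (Fin N)) ∈ G.filter fun h => (fun j => h (s j)) = s := by
      simp [hG]
    have := Finset.card_pos.2 ⟨_, this⟩
    have : K ≠ 0 := by simp only [K]; omega
    exact_mod_cast this
  rw [hsum, hcard, ← hBc, mul_inv]
  field_simp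

lemma rho_apply (n : Fin p → ℕ) (f : MvPolynomial (Fin (∑ t, n t)) ℚ) :
    rho n f = ((youngGroup n).card : ℚ)⁻¹ • ∑ h ∈ youngGroup n, permAct h f := by
  simp [rho, LinearMap.sum_apply]

lemma permAct_permAct {σ : Type*} (h w : Equiv.Perm σ) (f : MvPolynomial σ ℚ) :
    permAct h (permAct w f) = permAct (h * w) f := by
  simp [permAct, MvPolynomial.rename_rename]

lemma rho_permAct (n : Fin p → ℕ) (blk : Fin (∑ t, n t) → Fin p)
    (hG : ∀ w, w ∈ youngGroup n ↔ ∀ a, blk (w a) = blk a)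
    (w : Equiv.Perm (Fin (∑ t, n t))) (hw : ∀ a, blk (w a) = blk a)
    (f : MvPolynomial (Fin (∑ t, n t)) ℚ) : rho n (permAct w f) = rho n f := by
  rw [rho_apply, rho_apply]
  congr 1
  refine Finset.sum_bij' (fun h _ => h * w) (fun h _ => h * w⁻¹) ?_ ?_ ?_ ?_ ?_
  · intro h hh
    rw [hG] at hh ⊢
    intro a
    rw [Equiv.Perm.mul_apply, hh, hw]
  · intro h hh
    rw [hG] at hh ⊢
    intro a
    rw [Equiv.Perm.mul_apply, hh, ← hw, perm_apply_inv]
  · intro h _; simp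
  · intro h _; simp
  · intro h _; rw [permAct_permAct]

lemma Delta_perm {N b : ℕ} (t : Fin (b + 1) → Fin N) (e : Equiv.Perm (Fin (b + 1))) :
    Delta (fun i => t (e i)) = ((Equiv.Perm.sign e : ℤ) : ℚ) • Delta t := by
  rw [Delta_eq_VM, Delta_eq_VM]
  rw [VM_perm (fun i => (X (t i) : MvPolynomial (Fin N) ℚ)) e]
  rcases Int.units_eq_one_or (Equiv.Perm.sign e) with h | h <;> simp [h]

lemma rho_Delta_mem (b : ℕ) (n : Fin (b + 2) → ℕ) (blk : Fin (∑ t, n t) → Fin (b + 2))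
    (hG : ∀ w, w ∈ youngGroup n ↔ ∀ a, blk (w a) = blk a)
    (s : Fin (b + 2) → Fin (∑ t, n t)) (hs : ∀ j, blk (s j) = j)
    (t : Fin (b + 1) → Fin (∑ t, n t)) :
    rho n (Delta t) ∈ Submodule.span ℚ (Set.range fun k : Fin (b + 1) =>
      rho n (Delta fun i => s (k.castSucc.succAbove i))) := by
  set U := Submodule.span ℚ (Set.range fun k : Fin (b + 1) =>
      rho n (Delta fun i => s (k.castSucc.succAbove i))) with hU
  have hcast : ∀ k : Fin (b + 1), rho n (Delta fun i => s (k.castSucc.succAbove i)) ∈ U :=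
    fun k => Submodule.subset_span ⟨k, rfl⟩
  have hall : ∀ k : Fin (b + 2), rho n (Delta fun i => s (k.succAbove i)) ∈ U := by
    intro k
    induction k using Fin.lastCases with
    | cast k => exact hcast k
    | last =>
      have hrel := VM_rel (fun j => (X (s j) : MvPolynomial (Fin (∑ t, n t)) ℚ))
      have hrel' : ∑ k : Fin (b + 2), ((-1 : ℚ) ^ (k : ℕ)) • Delta (fun i => s (k.succAbove i))
          = 0 := by
        rw [← hrel]
        refine Finset.sum_congr rfl fun k _ => ?_
        rw [Delta_eq_VM]
        rcases neg_one_pow_eq_or ℚ (k : ℕ) with h | h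
        · rcases Nat.even_or_odd (k : ℕ) with e | e
          · simp [e.neg_one_pow]
          · simp [e.neg_one_pow]
        · rcases Nat.even_or_odd (k : ℕ) with e | e
          · simp [e.neg_one_pow]
          · simp [e.neg_one_pow]
      have h2 := congrArg (rho n) hrel'
      rw [map_sum, map_zero] at h2
      have h2 := (Fin.sum_univ_castSucc _).symm.trans h2
      simp only [map_smul] at h2
      have h3 := eq_neg_of_add_eq_zero_right h2
      have h4 : ((-1 : ℚ) ^ ((Fin.last (b + 1) : Fin (b + 2)) : ℕ)) •
          rho n (Delta fun i => s ((Fin.last (b + 1)).succAbove i)) ∈ U := by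
        rw [h3]
        exact Submodule.neg_mem _ (Submodule.sum_mem _ fun k _ =>
          Submodule.smul_mem _ _ (hcast k))
      exact (Submodule.smul_mem_iff _ (by simp)).1 h4
  by_cases hinj : Function.Injective (fun i => blk (t i))
  · have hns : ¬ Function.Surjective (fun i => blk (t i)) := by
      intro h
      have := Fintype.card_le_of_surjective _ h
      simp at this
    simp only [Function.Surjective, not_forall, not_exists] at hns
    obtain ⟨k, hk⟩ := hns
    choose e he using fun i => Fin.exists_succAbove_eq (hk i)
    have heinj : Function.Injective e := by
      intro i j hij
      apply hinj
      simp only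
      rw [← he, ← he, hij]
    let E := Equiv.ofBijective e (Finite.injective_iff_bijective.1 heinj)
    classical
    let s' : Fin (b + 2) → Fin (∑ t, n t) := fun j =>
      if h : ∃ i, blk (t i) = j then t h.choose else s j
    have hs'1 : ∀ j, blk (s' j) = j := by
      intro j
      simp only [s']
      split_ifs with h
      · exact h.choose_spec
      · exact hs j
    have hs'2 : ∀ i, s' (blk (t i)) = t i := by
      intro i
      have h : ∃ i', blk (t i') = blk (t i) := ⟨i, rfl⟩
      simp only [s', dif_pos h]
      congr 1
      exact hinj h.choose_spec
    obtain ⟨w, hw1, hw2⟩ := exists_mover blk s' s hs'1 hs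
    rw [← rho_permAct n blk hG w hw1, permAct_Delta]
    have h5 : (fun i => w (t i)) = fun i => (fun i' => s (k.succAbove i')) (E i) := by
      funext i
      have : k.succAbove (E i) = blk (t i) := he i
      simp only
      rw [← hs'2, hw2, this]
    rw [h5, Delta_perm (fun i' => s (k.succAbove i')) E, map_smul]
    exact Submodule.smul_mem _ _ (hall k)
  · simp only [Function.Injective, not_forall] at hinj
    obtain ⟨i, j, hij, hne⟩ := hinj
    by_cases ht : Function.Injective t
    · have h6 : rho n (Delta t) = - rho n (Delta t) := by
        conv_lhs => rw [← rho_permAct n blk hG (Equiv.swap (t i) (t j)) (by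
          intro a
          rw [Equiv.swap_apply_def]
          split_ifs with h h
          · rw [h, hij]
          · rw [h, hij]
          · rfl)]
        rw [permAct_Delta]
        have : (fun x => Equiv.swap (t i) (t j) (t x)) = fun x => t (Equiv.swap i j x) := by
          funext x
          exact (ht.map_swap i j x).symm
        rw [this, Delta_perm, Equiv.Perm.sign_swap hne]
        simp
      have h7 : rho n (Delta t) = 0 := self_eq_neg.1 h6
      rw [h7]; exact zero_mem _
    · simp only [Function.Injective, not_forall] at ht
      obtain ⟨i, j, hij, hne⟩ := ht
      rw [Delta_eq_VM, VM_eq_zero _ (i := i) (j := j) (by rw [hij]) hne, map_zero]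
      exact zero_mem _

/-- evaluation functional -/
def phi {N b : ℕ} (blk : Fin N → Fin (b + 2)) (k : Fin (b + 1)) : MvPolynomial (Fin N) ℚ →ₗ[ℚ] ℚ :=
  (MvPolynomial.aeval (fun a => yv b k (blk a))).toLinearMap

lemma phi_Delta {N b : ℕ} (blk : Fin N → Fin (b + 2)) (k : Fin (b + 1))
    (t : Fin (b + 1) → Fin N) : phi blk k (Delta t) = VM (fun i => yv b k (blk (t i))) := by
  rw [Delta_eq_VM]
  have := VM_map (MvPolynomial.aeval (R := ℚ) (fun a => yv b k (blk a))).toRingHom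
    (fun i => (X (t i) : MvPolynomial (Fin N) ℚ))
  simpa [phi] using this

lemma phi_permAct {N b : ℕ} (blk : Fin N → Fin (b + 2)) (k : Fin (b + 1))
    (w : Equiv.Perm (Fin N)) (hw : ∀ a, blk (w a) = blk a) (f : MvPolynomial (Fin N) ℚ) :
    phi blk k (permAct w f) = phi blk k f := by
  simp [phi, permAct, MvPolynomial.aeval_rename, Function.comp_def, hw]

lemma phi_rho (b : ℕ) (n : Fin (b + 2) → ℕ) (blk : Fin (∑ t, n t) → Fin (b + 2))
    (hG : ∀ w, w ∈ youngGroup n ↔ ∀ a, blk (w a) = blk a) (k : Fin (b + 1))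
    (f : MvPolynomial (Fin (∑ t, n t)) ℚ) : phi blk k (rho n f) = phi blk k f := by
  rw [rho_apply, map_smul, map_sum, Finset.sum_congr rfl fun h hh =>
    phi_permAct blk k h ((hG h).1 hh) f]
  have h1 : (1 : Equiv.Perm (Fin (∑ t, n t))) ∈ youngGroup n := by rw [hG]; simp
  have h2 : ((youngGroup n).card : ℚ) ≠ 0 := by
    have := (Finset.card_pos.2 ⟨_, h1⟩).ne'
    exact_mod_cast this
  simp [h2]

lemma sum_ind {α β : Type*} [Fintype α] [DecidableEq α] [DecidableEq β]
    (B S : α → Finset β) (h : ∀ j, S j ⊆ B j)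
    [DecidablePred fun c : α → β => ∀ j, c j ∈ S j] :
    ∑ c ∈ Fintype.piFinset B, (if ∀ j, c j ∈ S j then (1 : ℚ) else 0) = ∏ j, ((S j).card : ℚ) := by
  rw [Finset.sum_ite, Finset.sum_const_zero, add_zero, Finset.sum_const, nsmul_eq_mul, mul_one]
  have : (Fintype.piFinset B).filter (fun c => ∀ j, c j ∈ S j) = Fintype.piFinset S := by
    ext c
    simp only [Finset.mem_filter, Fintype.mem_piFinset]
    exact ⟨fun hc => hc.2, fun hc => ⟨fun j => h j (hc j), hc⟩⟩
  trans ((Fintype.piFinset S).card : ℚ)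
  · rw [← this]
  · rw [Fintype.card_piFinset]
    push_cast
    rfl

lemma esymVal_top {α : Type*} [DecidableEq α] (L : Finset α) (v : α → ℚ) :
    esymVal L L.card v = ∏ i ∈ L, v i := by
  simp [esymVal]

lemma esymVal_pred {α : Type*} [DecidableEq α] (L : Finset α) (hL : 0 < L.card) (v : α → ℚ) :
    esymVal L (L.card - 1) v = ∑ k ∈ L, ∏ i ∈ L.erase k, v i := by
  unfold esymVal
  symm
  refine Finset.sum_bij (fun k _ => L.erase k) ?_ ?_ ?_ ?_
  · intro k hk
    rw [Finset.mem_powersetCard]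
    exact ⟨Finset.erase_subset _ _, Finset.card_erase_of_mem hk⟩
  · intro k hk k' hk' h
    by_contra hne
    have : k ∈ L.erase k' := Finset.mem_erase.2 ⟨hne, hk⟩
    rw [← h] at this
    simp at this
  · intro A hA
    rw [Finset.mem_powersetCard] at hA
    have h1 : (L \ A).card = 1 := by
      rw [Finset.card_sdiff_of_subset hA.1]; omega
    obtain ⟨k, hk⟩ := Finset.card_eq_one.1 h1
    have hkL : k ∈ L \ A := by rw [hk]; simp
    refine ⟨k, (Finset.mem_sdiff.1 hkL).1, ?_⟩
    rw [← Finset.sdiff_singleton_eq_erase, ← hk, Finset.sdiff_sdiff_eq_self hA.1]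
  · intro _ _; rfl

lemma firstL_card (q ℓ : ℕ) (h : ℓ ≤ q) : (firstL q ℓ).card = ℓ := by
  unfold firstL
  rw [Fin.card_filter_val_lt]
  exact min_eq_right h

lemma sum_F {N b ℓ : ℕ} (hℓ2 : 2 ≤ ℓ) (hℓb : ℓ ≤ b + 1) (n : Fin (b + 2) → ℕ)
    (hn : ∀ j, 0 < n j)
    (blk : Fin N → Fin (b + 2)) (s : Fin (b + 2) → Fin N) (hs : ∀ j, blk (s j) = j)
    (hcard : ∀ j, (Finset.univ.filter fun a => blk a = j).card = n j)
    (g : Equiv.Perm (Fin N))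
    (hg1 : ∀ j k : Fin (b + 2), (k : ℕ) = (j : ℕ) + 1 → (k : ℕ) < ℓ → g (s j) = s k)
    (hg2 : ∀ j j' : Fin (b + 2), (j : ℕ) = ℓ - 1 → (j' : ℕ) = 0 → g (s j) = s j')
    (hg3 : ∀ a, (∀ j : Fin (b + 2), (j : ℕ) < ℓ → a ≠ s j) → g a = a) (k : Fin (b + 1)) :
    (∏ j, (n j : ℚ))⁻¹ *
      ∑ c ∈ Fintype.piFinset (fun j => Finset.univ.filter fun a => blk a = j),
        VM (fun i => yv b k (blk (g (c (k.castSucc.succAbove i)))))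
    = (∏ j ∈ firstL (b + 2) ℓ, (n j : ℚ))⁻¹ *
        ((∏ j ∈ firstL (b + 2) ℓ, ((n j : ℚ) - 1)) +
          if (k.castSucc : ℕ) < ℓ then ∏ j ∈ (firstL (b + 2) ℓ).erase k.castSucc, ((n j : ℚ) - 1)
          else (-1) ^ (ℓ - 1)) * VM (fun i => yv b k (k.castSucc.succAbove i)) := by
  set L := firstL (b + 2) ℓ with hL
  have hmemL : ∀ j, j ∈ L ↔ (j : ℕ) < ℓ := by intro j; simp [hL, firstL]
  set V := VM (fun i => yv b k (k.castSucc.succAbove i)) with hV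
  set B : Fin (b + 2) → Finset (Fin N) := fun j => Finset.univ.filter fun a => blk a = j with hB
  have hsB : ∀ j, s j ∈ B j := by intro j; simp [hB, hs]
  have hprod : ∀ f h : Fin (b + 2) → ℚ, (∏ j, if j ∈ L then f j else h j)
      = (∏ j ∈ L, f j) * ∏ j ∈ Lᶜ, h j := by
    intro f h
    rw [← Finset.prod_mul_prod_compl L]
    congr 1
    · exact Finset.prod_congr rfl fun j hj => if_pos hj
    · exact Finset.prod_congr rfl fun j hj => if_neg (Finset.mem_compl.1 hj)
  have hQ : (∏ j ∈ Lᶜ, (n j : ℚ)) ≠ 0 :=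
    Finset.prod_ne_zero_iff.2 fun j _ => by have := (hn j).ne'; exact_mod_cast this
  have hpi : (∏ j ∈ L, (n j : ℚ)) ≠ 0 :=
    Finset.prod_ne_zero_iff.2 fun j _ => by have := (hn j).ne'; exact_mod_cast this
  have hnn : (∏ j, (n j : ℚ)) = (∏ j ∈ L, (n j : ℚ)) * ∏ j ∈ Lᶜ, (n j : ℚ) :=
    (Finset.prod_mul_prod_compl L _).symm
  have herase : ∀ j, (((B j).erase (s j)).card : ℚ) = (n j : ℚ) - 1 := by
    intro j
    rw [Finset.card_erase_of_mem (hsB j), hcard, Nat.cast_sub (hn j)]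
    simp
  have hu : ∀ c ∈ Fintype.piFinset B, ∀ j : Fin (b + 2), ¬ ((j : ℕ) < ℓ ∧ c j = s j) →
      blk (g (c j)) = j := by
    intro c hc j hj
    have hcj : blk (c j) = j := by
      have := Fintype.mem_piFinset.1 hc j
      simpa [hB] using this
    rw [hg3, hcj]
    intro j' hj' h
    have : j = j' := by rw [← hcj, h, hs]
    subst this
    exact hj ⟨hj', h⟩
  have hu1 : ∀ c : Fin (b + 2) → Fin N, ∀ j : Fin (b + 2), (j : ℕ) + 1 < ℓ → c j = s j →
      (blk (g (c j)) : ℕ) = j + 1 := by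
    intro c j hj h
    rw [h, hg1 j ⟨j + 1, by omega⟩ rfl hj, hs]
  have hu2 : ∀ c : Fin (b + 2) → Fin N, ∀ j : Fin (b + 2), (j : ℕ) + 1 = ℓ → c j = s j →
      (blk (g (c j)) : ℕ) = 0 := by
    intro c j hj h
    rw [h, hg2 j ⟨0, by omega⟩ (by omega) rfl, hs]
  by_cases hk : (k.castSucc : ℕ) < ℓ
  · rw [if_pos hk]
    let S : Fin (b + 2) → Finset (Fin N) := fun j =>
      if j ∈ L then (if j = k.castSucc then B j else (B j).erase (s j)) else B j
    have hS : ∀ j, S j ⊆ B j := by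
      intro j
      simp only [S]
      split_ifs
      · rfl
      · exact Finset.erase_subset _ _
      · rfl
    have hF : ∀ c ∈ Fintype.piFinset B,
        VM (fun i => yv b k (blk (g (c (k.castSucc.succAbove i)))))
          = (if ∀ j, c j ∈ S j then (1 : ℚ) else 0) * V := by
      intro c hc
      have hcB := Fintype.mem_piFinset.1 hc
      by_cases h : ∀ j : Fin (b + 2), (j : ℕ) < ℓ → j ≠ k.castSucc → ¬ c j = s j
      · rw [if_pos, one_mul]
        · exact R1 b ℓ k (fun j => c j = s j) (fun j => blk (g (c j))) (hu c hc) h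
        · intro j
          simp only [S]
          split_ifs with h1 h2
          · exact hcB j
          · exact Finset.mem_erase.2 ⟨h j ((hmemL j).1 h1) h2, hcB j⟩
          · exact hcB j
      · rw [if_neg, zero_mul]
        · push Not at h
          obtain ⟨j0, h1, h2, h3⟩ := h
          exact R3 b ℓ hℓ2 hℓb k (fun j => c j = s j) (fun j => blk (g (c j))) (hu c hc)
            (hu1 c) (hu2 c) j0 k.castSucc h1 h2 h3 hk (Or.inl rfl)
        · intro hall
          apply h
          intro j h1 h2 h3
          have := hall j
          simp only [S, if_pos ((hmemL j).2 h1), if_neg h2, h3] at this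
          simp at this
    rw [Finset.sum_congr rfl hF, ← Finset.sum_mul, sum_ind B S hS]
    have hSc : ∀ j, ((S j).card : ℚ) = if j ∈ L then
        (if j = k.castSucc then (n j : ℚ) else (n j : ℚ) - 1) else (n j : ℚ) := by
      intro j
      simp only [S]
      split_ifs
      · rw [hcard]
      · rw [herase]
      · rw [hcard]
    rw [Finset.prod_congr rfl fun j _ => hSc j, hprod, hnn]
    have hkL := (hmemL k.castSucc).2 hk
    have e1 : ∏ j ∈ L, (if j = k.castSucc then (n j : ℚ) else (n j : ℚ) - 1)
        = (n k.castSucc : ℚ) * ∏ j ∈ L.erase k.castSucc, ((n j : ℚ) - 1) := by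
      rw [← Finset.mul_prod_erase L _ hkL, if_pos rfl]
      congr 1
      exact Finset.prod_congr rfl fun j hj => if_neg (Finset.mem_erase.1 hj).1
    have e2 : ∏ j ∈ L, ((n j : ℚ) - 1)
        = ((n k.castSucc : ℚ) - 1) * ∏ j ∈ L.erase k.castSucc, ((n j : ℚ) - 1) :=
      (Finset.mul_prod_erase L _ hkL).symm
    rw [e1, e2]
    field_simp
    ring
  · rw [if_neg hk]
    have hkℓ : ℓ ≤ (k : ℕ) := by simpa using hk
    let S : Fin (b + 2) → Finset (Fin N) := fun j =>
      if j ∈ L then (B j).erase (s j) else B j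
    let S' : Fin (b + 2) → Finset (Fin N) := fun j =>
      if j ∈ L then {s j} else B j
    have hS : ∀ j, S j ⊆ B j := by
      intro j
      simp only [S]
      split_ifs
      · exact Finset.erase_subset _ _
      · rfl
    have hS' : ∀ j, S' j ⊆ B j := by
      intro j
      simp only [S']
      split_ifs
      · exact Finset.singleton_subset_iff.2 (hsB j)
      · rfl
    let z : Fin (b + 2) := ⟨0, by omega⟩
    have hz : (z : ℕ) < ℓ := by simp only [z]; omega
    have hnk : ∀ j : Fin (b + 2), (j : ℕ) < ℓ → j ≠ k.castSucc := by
      rintro j hj rfl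
      exact hk hj
    have hF : ∀ c ∈ Fintype.piFinset B,
        VM (fun i => yv b k (blk (g (c (k.castSucc.succAbove i)))))
          = (if ∀ j, c j ∈ S j then (1 : ℚ) else 0) * V
            + (if ∀ j, c j ∈ S' j then (1 : ℚ) else 0) * ((-1) ^ (ℓ - 1) * V) := by
      intro c hc
      have hcB := Fintype.mem_piFinset.1 hc
      have i1 : (∀ j, c j ∈ S j) ↔ ∀ j : Fin (b + 2), (j : ℕ) < ℓ → ¬ c j = s j := by
        constructor
        · intro h j hj hcs
          have := h j
          simp only [S, if_pos ((hmemL j).2 hj), hcs] at this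
          simp at this
        · intro h j
          simp only [S]
          split_ifs with h1
          · exact Finset.mem_erase.2 ⟨h j ((hmemL j).1 h1), hcB j⟩
          · exact hcB j
      have i2 : (∀ j, c j ∈ S' j) ↔ ∀ j : Fin (b + 2), (j : ℕ) < ℓ → c j = s j := by
        constructor
        · intro h j hj
          have := h j
          simp only [S', if_pos ((hmemL j).2 hj)] at this
          simpa using this
        · intro h j
          simp only [S']
          split_ifs with h1
          · exact Finset.mem_singleton.2 (h j ((hmemL j).1 h1))
          · exact hcB j
      by_cases h : ∀ j : Fin (b + 2), (j : ℕ) < ℓ → ¬ c j = s j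
      · rw [if_pos (i1.2 h), if_neg (fun h' => h z hz (i2.1 h' z hz)), one_mul, zero_mul, add_zero]
        exact R1 b ℓ k (fun j => c j = s j) (fun j => blk (g (c j))) (hu c hc)
          (fun j hj _ => h j hj)
      · rw [if_neg (fun h' => h (i1.1 h')), zero_mul, zero_add]
        by_cases h' : ∀ j : Fin (b + 2), (j : ℕ) < ℓ → c j = s j
        · rw [if_pos (i2.2 h'), one_mul]
          exact R2 b ℓ hℓ2 k hkℓ (fun j => c j = s j) (fun j => blk (g (c j))) (hu c hc)
            (hu1 c) (hu2 c) h'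
        · rw [if_neg (fun h'' => h' (i2.1 h'')), zero_mul]
          push Not at h h'
          obtain ⟨j0, h1, h2⟩ := h
          obtain ⟨j1, h3, h4⟩ := h'
          exact R3 b ℓ hℓ2 hℓb k (fun j => c j = s j) (fun j => blk (g (c j))) (hu c hc)
            (hu1 c) (hu2 c) j0 j1 h1 (hnk j0 h1) h2 h3 (Or.inr h4)
    rw [Finset.sum_congr rfl hF, Finset.sum_add_distrib, ← Finset.sum_mul, ← Finset.sum_mul,
      sum_ind B S hS, sum_ind B S' hS']
    have hSc : ∀ j, ((S j).card : ℚ) = if j ∈ L then (n j : ℚ) - 1 else (n j : ℚ) := by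
      intro j
      simp only [S]
      split_ifs
      · rw [herase]
      · rw [hcard]
    have hSc' : ∀ j, ((S' j).card : ℚ) = if j ∈ L then (1 : ℚ) else (n j : ℚ) := by
      intro j
      simp only [S']
      split_ifs
      · simp
      · rw [hcard]
    rw [Finset.prod_congr rfl fun j _ => hSc j, Finset.prod_congr rfl fun j _ => hSc' j,
      hprod, hprod, hnn, Finset.prod_const_one]
    field_simp

theorem sphericalFunction_hook_p_eq_b_add_two (p b ℓ : ℕ) (n : Fin p → ℕ) (hn : ∀ j, 0 < n j)
    (hp : p = b + 2) (hℓ2 : 2 ≤ ℓ) (hℓp : ℓ ≤ b + 1)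
    (g : Equiv.Perm (Fin (∑ t, n t)))
    (hg1 : ∀ j k : Fin p, (k : ℕ) = (j : ℕ) + 1 → (k : ℕ) < ℓ →
      g (emb n j ⟨0, hn j⟩) = emb n k ⟨0, hn k⟩)
    (hg2 : ∀ j j' : Fin p, (j : ℕ) = ℓ - 1 → (j' : ℕ) = 0 →
      g (emb n j ⟨0, hn j⟩) = emb n j' ⟨0, hn j'⟩)
    (hg3 : ∀ a, (∀ j : Fin p, (j : ℕ) < ℓ → a ≠ emb n j ⟨0, hn j⟩) → g a = a)
    (hW : ∀ f ∈ hookSpan (∑ t, n t) b,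
      ((rho n).comp (permAct g)) f ∈ hookSpan (∑ t, n t) b) :
    LinearMap.trace ℚ (hookSpan (∑ t, n t) b) (((rho n).comp (permAct g)).restrict hW)
      = (∏ i ∈ firstL p ℓ, (n i : ℚ))⁻¹ *
        (((b : ℚ) + 1) * esymVal (firstL p ℓ) ℓ (fun i => (n i : ℚ) - 1)
          + esymVal (firstL p ℓ) (ℓ - 1) (fun i => (n i : ℚ) - 1)
          + (-1 : ℚ) ^ (ℓ - 1) * ((b : ℚ) - (ℓ : ℚ) + 1)) := by
  subst hp
  obtain ⟨blk, hb1, hb2, hcard⟩ := exists_blk n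
  have hG := mem_young n blk hb1 hb2
  let s : Fin (b + 2) → Fin (∑ t, n t) := fun j => emb n j ⟨0, hn j⟩
  have hs : ∀ j, blk (s j) = j := fun j => hb1 j _
  have hfin := hookSpan_finite (∑ t, n t) b
  let D : Fin (b + 1) → MvPolynomial (Fin (∑ t, n t)) ℚ := fun k =>
    rho n (Delta fun i => s (k.castSucc.succAbove i))
  have hDφ : ∀ k k' : Fin (b + 1), phi blk k (D k')
      = VM (fun i => yv b k (k'.castSucc.succAbove i)) := by
    intro k k'
    simp only [D]
    rw [phi_rho b n blk hG, phi_Delta]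
    simp only [hs]
  have hne : ∀ k, phi blk k (D k) ≠ 0 := by
    intro k
    rw [hDφ]
    exact VM_ne_zero _ (yv_inj b k)
  have hD : ∀ k, D k ∈ hookSpan (∑ t, n t) b := by
    intro k
    simp only [D]
    rw [rho_apply]
    refine Submodule.smul_mem _ _ (Submodule.sum_mem _ fun h _ => ?_)
    rw [permAct_Delta]
    exact Delta_mem _
  rw [trace_lemma (hookSpan (∑ t, n t) b) ((rho n).comp (permAct g)) hW D (phi blk) hD ?_ ?_ hne]
  · have hval : ∀ k : Fin (b + 1), phi blk k (((rho n).comp (permAct g)) (D k)) / phi blk k (D k)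
        = (∏ j ∈ firstL (b + 2) ℓ, (n j : ℚ))⁻¹ *
        ((∏ j ∈ firstL (b + 2) ℓ, ((n j : ℚ) - 1)) +
          if (k.castSucc : ℕ) < ℓ then ∏ j ∈ (firstL (b + 2) ℓ).erase k.castSucc, ((n j : ℚ) - 1)
          else (-1) ^ (ℓ - 1)) := by
      intro k
      rw [div_eq_iff (hne k), hDφ, LinearMap.comp_apply, phi_rho b n blk hG]
      rw [← sum_F hℓ2 hℓp n hn blk s hs hcard g hg1 hg2 hg3 k]
      have havg := young_avg (youngGroup n) blk hG s hs
        (fun c => VM (fun i => yv b k (blk (g (c (k.castSucc.succAbove i))))))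
      rw [Finset.prod_congr rfl fun j _ => congrArg (Nat.cast (R := ℚ)) (hcard j)] at havg
      rw [← havg]
      simp only [D]
      rw [rho_apply, map_smul, map_smul, map_sum, map_sum, smul_eq_mul]
      congr 1
      refine Finset.sum_congr rfl fun h _ => ?_
      rw [permAct_Delta, permAct_Delta, phi_Delta]
    rw [Finset.sum_congr rfl fun k _ => hval k, ← Finset.mul_sum, Finset.sum_add_distrib]
    congr 1
    have hLc := firstL_card (b + 2) ℓ (by omega)
    have e1 := esymVal_top (firstL (b + 2) ℓ) (fun i => (n i : ℚ) - 1)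
    have e2 := esymVal_pred (firstL (b + 2) ℓ) (by omega) (fun i => (n i : ℚ) - 1)
    rw [hLc] at e1 e2
    rw [e1, e2]
    have hsum : ∑ j : Fin (b + 2), (if (j : ℕ) < ℓ then
        ∏ i ∈ (firstL (b + 2) ℓ).erase j, ((n i : ℚ) - 1) else (-1) ^ (ℓ - 1))
        = (∑ k ∈ firstL (b + 2) ℓ, ∏ i ∈ (firstL (b + 2) ℓ).erase k, ((n i : ℚ) - 1))
          + ((b : ℚ) + 2 - ℓ) * (-1) ^ (ℓ - 1) := by
      rw [Finset.sum_ite, Finset.sum_const, nsmul_eq_mul]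
      congr 2
      have h1 := Finset.card_filter_add_card_filter_not (s := (Finset.univ : Finset (Fin (b + 2))))
        (fun j : Fin (b + 2) => (j : ℕ) < ℓ)
      have h2 : (Finset.univ.filter fun j : Fin (b + 2) => (j : ℕ) < ℓ).card = ℓ := hLc
      rw [h2, Finset.card_univ, Fintype.card_fin] at h1
      have h3 : ((ℓ : ℚ) + ((Finset.univ.filter fun j : Fin (b + 2) => ¬ (j : ℕ) < ℓ).card : ℚ))
          = b + 2 := by exact_mod_cast h1
      linarith
    have hsplit := (Fin.sum_univ_castSucc (fun j : Fin (b + 2) => (if (j : ℕ) < ℓ then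
        ∏ i ∈ (firstL (b + 2) ℓ).erase j, ((n i : ℚ) - 1) else (-1) ^ (ℓ - 1)))).symm.trans hsum
    rw [if_neg (by rw [Fin.val_last]; omega)] at hsplit
    rw [Finset.sum_const, Finset.card_univ, Fintype.card_fin, nsmul_eq_mul]
    push_cast
    linarith
  · intro f hf
    rw [LinearMap.comp_apply]
    have : ∀ f ∈ hookSpan (∑ t, n t) b, rho n (permAct g f) ∈ Submodule.span ℚ (Set.range D) := by
      intro f hf
      induction hf using Submodule.span_induction with
      | mem x hx =>
        obtain ⟨t, _, rfl⟩ := hx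
        rw [permAct_Delta]
        exact rho_Delta_mem b n blk hG s hs _
      | zero => simp
      | add x y _ _ hx hy => rw [map_add, map_add]; exact Submodule.add_mem _ hx hy
      | smul a x _ hx => rw [map_smul, map_smul]; exact Submodule.smul_mem _ _ hx
    exact this f hf
  · intro k k' hkk
    rw [hDφ]
    refine VM_yv_zero b k k'.castSucc (fun j => j) (x := k.castSucc) (y := Fin.last (b + 1))
      ?_ ?_ ?_ ?_
    · intro h; exact hkk (Fin.castSucc_injective _ h)
    · exact (Fin.castSucc_lt_last k').ne'
    · exact (Fin.castSucc_lt_last k).ne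
    · simp [yv, (Fin.castSucc_lt_last k).ne]

end
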